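/- (Corollary 4.4.) In U(gl(m,ℂ)), for every q ≥ 0 the Casimir elements satisfy Σ_{p=0}^q binom(q,p)·(−m)^{q−p}·c̃_p = (−1)^q·K_{q+1}(−c) and Σ_{p=0}^q binom(q,p)·(−m)^{q−p}·c_p = (−1)^q·K_{q+1}(−c̃). -/

import Mathlib

open Finset

attribute [local instance 100] LieRing.ofAssociativeRing

/-- `gl(m, ℂ)`: the Lie algebra of `m × m` complex matrices. -/
abbrev glm (m : ℕ) := Matrix (Fin m) (Fin m) ℂ

/-- The universal enveloping algebra `U(gl(m,ℂ))`. -/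
abbrev UEA (m : ℕ) := UniversalEnvelopingAlgebra ℂ (glm m)

/-- The image of the matrix unit `e_{kl}` in `U(gl(m,ℂ))`. -/
noncomputable def E {m : ℕ} (k l : Fin m) : UEA m :=
  UniversalEnvelopingAlgebra.ι ℂ (Matrix.single k l (1 : ℂ))

/-- `e_{kl}^q`, defined by `e_{kl}^0 = δ_{kl}` and `e_{kl}^{q+1} = Σ_i e_{ki} e_{il}^q`. -/
noncomputable def Epow {m : ℕ} : ℕ → Fin m → Fin m → UEA m
  | 0, k, l => if k = l then 1 else 0
  | q + 1, k, l => ∑ i, E k i * Epow q i l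

/-- `ẽ_{kl}^q`, defined by `ẽ_{kl}^0 = δ_{kl}` and `ẽ_{kl}^{q+1} = −Σ_i e_{ik} ẽ_{il}^q`. -/
noncomputable def Etil {m : ℕ} : ℕ → Fin m → Fin m → UEA m
  | 0, k, l => if k = l then 1 else 0
  | q + 1, k, l => -∑ i, E i k * Etil q i l

/-- The Casimir element `c_q = Σ_k e_{kk}^q`. -/
noncomputable def Cas (m : ℕ) (q : ℕ) : UEA m := ∑ k : Fin m, Epow q k k

/-- The Casimir element `c̃_q = Σ_k ẽ_{kk}^q`. -/
noncomputable def CasT (m : ℕ) (q : ℕ) : UEA m := ∑ k : Fin m, Etil q k k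

/-- `K_n(−c) ∈ U(gl(m,ℂ))`: `K_0(−c) = 1` and `K_n(−c) = Σ_{p=0}^{n−1} K_p(−c)·c_{n−1−p}`. -/
noncomputable def Kc (m : ℕ) : ℕ → UEA m
  | 0 => 1
  | n + 1 => ∑ p ∈ (Finset.range (n + 1)).attach, Kc m p.1 * Cas m (n - p.1)
  decreasing_by exact Finset.mem_range.mp p.2

/-- `K_n(−c̃) ∈ U(gl(m,ℂ))`: `K_0(−c̃) = 1` and `K_n(−c̃) = Σ_{p=0}^{n−1} K_p(−c̃)·c̃_{n−1−p}`. -/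
noncomputable def KcT (m : ℕ) : ℕ → UEA m
  | 0 => 1
  | n + 1 => ∑ p ∈ (Finset.range (n + 1)).attach, KcT m p.1 * CasT m (n - p.1)
  decreasing_by exact Finset.mem_range.mp p.2

/-!
For a matrix `A` whose entries satisfy the `gl` relations, bracketing with an entry `A i j` acts on
the entries of `A` as commutation with the elementary matrix `single j i 1`, hence acts the same way
on the entries of every power of `A`. Contracting indices gives
`(Aᵀ + m) (A ^ p)ᵀ = (A ^ (p + 1))ᵀ + tr (A ^ p)`, that is, with `c(t) = ∑ tr (A ^ p) t ^ p`,
`(1 - t (Aᵀ + m)) ∑ (A ^ p)ᵀ t ^ p = 1 - t c(t)`. Therefore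
`(Aᵀ + m) ^ q = ∑ (A ^ p)ᵀ K_{q - p}`, where the `K_n` are the coefficients of the reciprocal of
`1 - t c(t)`, and the trace of the right-hand side is `K_{q + 1}`. The binomial expansion of
`(-Aᵀ - m) ^ q = (-1) ^ q (Aᵀ + m) ^ q` yields the first identity. Since `-Aᵀ` satisfies the same
relations, the second identity is the first one for `-Aᵀ`.
-/

section ReciprocalCoeff

open PowerSeries

variable {R : Type*} [Ring R]

/-- `K_n(-c)` for a sequence `c` in an arbitrary ring: the coefficient of `t ^ n` in the
(two-sided) reciprocal of the power series `1 - t ∑ c_p t ^ p`. -/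
noncomputable def reciprocalCoeff (c : ℕ → R) (n : ℕ) : R :=
  coeff n (invOfUnit (1 - X * PowerSeries.mk c) 1)

variable (c : ℕ → R)

theorem reciprocalCoeff_zero : reciprocalCoeff c 0 = 1 := by
  simp [reciprocalCoeff]

theorem reciprocalCoeff_succ (n : ℕ) :
    reciprocalCoeff c (n + 1) = ∑ p ∈ range (n + 1), c p * reciprocalCoeff c (n - p) := by
  have h : (1 - X * PowerSeries.mk c) * invOfUnit (1 - X * PowerSeries.mk c) 1 = 1 :=
    mul_invOfUnit _ _ (by simp)
  rw [sub_mul, one_mul, mul_assoc, sub_eq_iff_eq_add] at h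
  have hn := congrArg (coeff (n + 1)) h
  rw [map_add, coeff_succ_X_mul, coeff_mul] at hn
  simpa [reciprocalCoeff, coeff_one, Nat.sum_antidiagonal_eq_sum_range_succ_mk] using hn

theorem reciprocalCoeff_succ' (n : ℕ) :
    reciprocalCoeff c (n + 1) = ∑ p ∈ range (n + 1), reciprocalCoeff c p * c (n - p) := by
  have h : invOfUnit (1 - X * PowerSeries.mk c) 1 * (1 - X * PowerSeries.mk c) = 1 :=
    invOfUnit_mul _ _ (by simp)
  rw [mul_sub, mul_one, ← mul_assoc, (commute_X _).eq, mul_assoc, sub_eq_iff_eq_add] at h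
  have hn := congrArg (coeff (n + 1)) h
  rw [map_add, coeff_succ_X_mul, coeff_mul] at hn
  simpa [reciprocalCoeff, coeff_one, Nat.sum_antidiagonal_eq_sum_range_succ_mk] using hn

variable {c}

theorem eq_reciprocalCoeff {K : ℕ → R} (zero : K 0 = 1)
    (succ : ∀ n, K (n + 1) = ∑ p ∈ range (n + 1), K p * c (n - p)) (n : ℕ) :
    K n = reciprocalCoeff c n := by
  induction n using Nat.strong_induction_on with
  | _ n ih =>
    cases n with
    | zero => rw [zero, reciprocalCoeff_zero]
    | succ n =>
      rw [succ, reciprocalCoeff_succ']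
      exact sum_congr rfl fun p hp => by rw [ih p (mem_range.mp hp)]

end ReciprocalCoeff

theorem add_algebraMap_pow {k S : Type*} [CommSemiring k] [Semiring S] [Algebra k S]
    (a : S) (r : k) (q : ℕ) :
    (a + algebraMap k S r) ^ q =
      ∑ p ∈ range (q + 1), ((q.choose p : k) * r ^ (q - p)) • a ^ p := by
  rw [(Algebra.commute_algebraMap_right r a).add_pow]
  refine sum_congr rfl fun p _ => ?_
  rw [mul_assoc, ← map_pow, ← map_natCast (algebraMap k S), ← map_mul, ← Algebra.commutes,
    ← Algebra.smul_def, mul_comm]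

section GLMatrix

open Matrix

variable {n R : Type*} [DecidableEq n] [Ring R]

/-- The entries of `A` satisfy the commutation relations of the matrix units of `gl`, that is,
`A i j` may be substituted for `e_{ij}`. -/
def IsGLMatrix (A : Matrix n n R) : Prop :=
  ∀ i j k l, ⁅A i j, A k l⁆ = (if j = k then A i l else 0) - (if l = i then A k j else 0)

theorem IsGLMatrix.neg_transpose {A : Matrix n n R} (hA : IsGLMatrix A) : IsGLMatrix (-Aᵀ) := by
  intro i j k l
  have h := hA j i l k
  simp only [eq_comm (a := i) (b := l), eq_comm (a := k) (b := j)] at h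
  simp only [Matrix.neg_apply, transpose_apply, neg_lie, lie_neg, neg_neg, h]
  split_ifs <;> abel

variable [Fintype n]

theorem commute_scalar_sub_single_iff {a : R} {i j : n} {M : Matrix n n R} :
    Commute (scalar n a - single j i 1) M ↔
      ∀ k l, ⁅a, M k l⁆ = (if j = k then M i l else 0) - (if l = i then M k j else 0) := by
  have left_apply (k l : n) :
      (single j i 1 * M : Matrix n n R) k l = if j = k then M i l else 0 := by
    simp [mul_apply, single_apply, ite_and]
  have right_apply (k l : n) :
      (M * single j i 1 : Matrix n n R) k l = if l = i then M k j else 0 := by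
    simp [mul_apply, single_apply, ite_and, eq_comm]
  rw [commute_iff_eq, sub_mul, mul_sub, sub_eq_sub_iff_sub_eq_sub, ← Matrix.ext_iff]
  simp [Ring.lie_def, left_apply, right_apply]

namespace IsGLMatrix

variable {A : Matrix n n R}

theorem lie_pow_apply (hA : IsGLMatrix A) (p : ℕ) (i j k l : n) :
    ⁅A i j, (A ^ p) k l⁆ =
      (if j = k then (A ^ p) i l else 0) - (if l = i then (A ^ p) k j else 0) :=
  have hcomm : Commute (scalar n (A i j) - single j i 1) A :=
    commute_scalar_sub_single_iff.mpr (hA i j)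
  commute_scalar_sub_single_iff.mp (hcomm.pow_right p) k l

theorem transpose_add_card_mul_transpose_pow (hA : IsGLMatrix A) (p : ℕ) :
    (Aᵀ + (Fintype.card n : Matrix n n R)) * (A ^ p)ᵀ =
      (A ^ (p + 1))ᵀ + scalar n (trace (A ^ p)) := by
  rw [add_mul, ← nsmul_eq_mul]
  ext k l
  have swap (i : n) : A i k * (A ^ p) l i =
      (A ^ p) l i * A i k + ((if k = l then (A ^ p) i i else 0) - (A ^ p) l k) := by
    rw [← sub_eq_iff_eq_add', ← Ring.lie_def, hA.lie_pow_apply, if_pos rfl]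
  have contract : ∑ i, A i k * (A ^ p) l i =
      (A ^ (p + 1)) l k +
        ((if k = l then trace (A ^ p) else 0) - Fintype.card n • (A ^ p) l k) := by
    simp only [swap, sum_add_distrib, sum_sub_distrib, pow_succ, mul_apply, sum_const, card_univ]
    split_ifs <;> simp [trace]
  simp only [Matrix.add_apply, Matrix.smul_apply, transpose_apply, mul_apply, contract,
    scalar_apply, diagonal_apply]
  abel

theorem transpose_add_card_pow (hA : IsGLMatrix A) (q : ℕ) :
    (Aᵀ + (Fintype.card n : Matrix n n R)) ^ q =
      ∑ p ∈ range (q + 1),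
        (A ^ p)ᵀ * scalar n (reciprocalCoeff (fun r => trace (A ^ r)) (q - p)) := by
  induction q with
  | zero => simp [reciprocalCoeff_zero]
  | succ q ih =>
    rw [pow_succ', ih, mul_sum]
    simp only [← mul_assoc, hA.transpose_add_card_mul_transpose_pow, add_mul, sum_add_distrib]
    rw [sum_range_succ' _ (q + 1)]
    simp only [Nat.add_sub_add_right, Nat.sub_zero, pow_zero, transpose_one, one_mul,
      reciprocalCoeff_succ _ q, map_sum, map_mul]

theorem trace_transpose_add_card_pow (hA : IsGLMatrix A) (q : ℕ) :
    trace ((Aᵀ + (Fintype.card n : Matrix n n R)) ^ q) =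
      reciprocalCoeff (fun r => trace (A ^ r)) (q + 1) := by
  rw [hA.transpose_add_card_pow, trace_sum, reciprocalCoeff_succ]
  refine sum_congr rfl fun p _ => ?_
  simp [trace, sum_mul]

theorem sum_smul_trace_neg_transpose_pow (k : Type*) [CommRing k] [Algebra k R]
    (hA : IsGLMatrix A) (q : ℕ) :
    ∑ p ∈ range (q + 1),
        ((q.choose p : k) * (-(Fintype.card n : k)) ^ (q - p)) • trace ((-Aᵀ) ^ p) =
      (-1 : k) ^ q • reciprocalCoeff (fun r => trace (A ^ r)) (q + 1) := by
  have shift : -Aᵀ + algebraMap k (Matrix n n R) (-(Fintype.card n : k)) =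
      (-1 : k) • (Aᵀ + (Fintype.card n : Matrix n n R)) := by
    rw [map_neg, map_natCast, neg_one_smul, neg_add]
  simp only [← trace_smul]
  rw [← trace_sum, ← add_algebraMap_pow, shift, smul_pow, trace_smul,
    hA.trace_transpose_add_card_pow]

end IsGLMatrix

theorem statement14_general {k : Type*} [CommRing k] [Algebra k R] {A : Matrix n n R}
    (hA : IsGLMatrix A) (q : ℕ) :
    (∑ p ∈ range (q + 1),
          ((q.choose p : k) * (-(Fintype.card n : k)) ^ (q - p)) • trace ((-Aᵀ) ^ p)
        = (-1 : k) ^ q • reciprocalCoeff (fun r => trace (A ^ r)) (q + 1)) ∧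
      ∑ p ∈ range (q + 1),
          ((q.choose p : k) * (-(Fintype.card n : k)) ^ (q - p)) • trace (A ^ p)
        = (-1 : k) ^ q • reciprocalCoeff (fun r => trace ((-Aᵀ) ^ r)) (q + 1) :=
  ⟨hA.sum_smul_trace_neg_transpose_pow k q,
    by simpa using hA.neg_transpose.sum_smul_trace_neg_transpose_pow k q⟩

end GLMatrix

section Casimir

open Matrix

/-- The matrix over `U(gl(m,ℂ))` whose `(k, l)` entry is `e_{kl}`, so that `e_{kl}^q` is the
`(k, l)` entry of its `q`-th power. -/
noncomputable def generatorMatrix (m : ℕ) : Matrix (Fin m) (Fin m) (UEA m) := of E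

variable (m : ℕ)

theorem isGLMatrix_generatorMatrix : IsGLMatrix (generatorMatrix m) := by
  intro i j k l
  have lie_single : ⁅single i j (1 : ℂ), single k l (1 : ℂ)⁆ =
      (if j = k then single i l 1 else 0) - (if l = i then single k j 1 else 0) := by
    rw [Ring.lie_def]
    split_ifs <;> simp_all
  simp only [generatorMatrix, of_apply, E]
  rw [← LieHom.map_lie, lie_single, map_sub]
  split_ifs <;> simp only [map_zero]

variable {m} in
theorem Epow_eq_pow_apply (q : ℕ) (k l : Fin m) : Epow q k l = (generatorMatrix m ^ q) k l := by
  induction q generalizing k l with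
  | zero => simp [Epow, one_apply]
  | succ q ih => simp [Epow, pow_succ', mul_apply, ih, generatorMatrix]

variable {m} in
theorem Etil_eq_pow_apply (q : ℕ) (k l : Fin m) :
    Etil q k l = ((-(generatorMatrix m)ᵀ) ^ q) k l := by
  induction q generalizing k l with
  | zero => simp [Etil, one_apply]
  | succ q ih => rw [pow_succ', mul_apply]; simp [Etil, ih, generatorMatrix]

theorem Cas_eq_trace_pow (q : ℕ) : Cas m q = trace (generatorMatrix m ^ q) := by
  simp [Cas, trace, Epow_eq_pow_apply]

theorem CasT_eq_trace_pow (q : ℕ) : CasT m q = trace ((-(generatorMatrix m)ᵀ) ^ q) := by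
  simp [CasT, trace, Etil_eq_pow_apply]

theorem Kc_eq_reciprocalCoeff (n : ℕ) : Kc m n = reciprocalCoeff (Cas m) n := by
  refine eq_reciprocalCoeff (by rw [Kc]) (fun n => ?_) n
  rw [Kc, sum_attach (range (n + 1)) fun p => Kc m p * Cas m (n - p)]

theorem KcT_eq_reciprocalCoeff (n : ℕ) : KcT m n = reciprocalCoeff (CasT m) n := by
  refine eq_reciprocalCoeff (by rw [KcT]) (fun n => ?_) n
  rw [KcT, sum_attach (range (n + 1)) fun p => KcT m p * CasT m (n - p)]

end Casimir

/-- Corollary 4.4: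
`Σ_{p=0}^q C(q,p) (−m)^{q−p} c̃_p = (−1)^q K_{q+1}(−c)` and
`Σ_{p=0}^q C(q,p) (−m)^{q−p} c_p = (−1)^q K_{q+1}(−c̃)`. -/
theorem statement14 (m : ℕ) (hm : 1 ≤ m) (q : ℕ) :
    (∑ p ∈ Finset.range (q + 1), ((q.choose p : ℂ) * (-(m : ℂ)) ^ (q - p)) • CasT m p
        = (-1 : ℂ) ^ q • Kc m (q + 1)) ∧
      ∑ p ∈ Finset.range (q + 1), ((q.choose p : ℂ) * (-(m : ℂ)) ^ (q - p)) • Cas m p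
        = (-1 : ℂ) ^ q • KcT m (q + 1) := by
  simpa only [Kc_eq_reciprocalCoeff, KcT_eq_reciprocalCoeff, funext (Cas_eq_trace_pow m),
    funext (CasT_eq_trace_pow m), Fintype.card_fin]
    using statement14_general (k := ℂ) (isGLMatrix_generatorMatrix m) q
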